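/- Fix an integer n ≥ 2, θ ∈ (0, π) and ε₁ > 0. There exists ε₃ ∈ (0, θ) depending only on ε₁, θ, n with the following property: for every n×n positive-definite Hermitian complex matrix χ₀, every n×n Hermitian matrix ω with ω ∈ Γ_{χ₀,θ}, and every Hermitian matrix χ with χ ≥ χ₀ (Loewner order), one has ω + ε₁χ ∈ Γ_{χ₀,θ−ε₃}. -/

import Mathlib

open Real Matrix
open scoped ComplexOrder Classical

/-- The arccotangent with range `(0, π)`. -/
noncomputable def arccot (x : ℝ) : ℝ := π / 2 - Real.arctan x

open scoped MatrixOrder in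
/-- The eigenvalues of `ω` with respect to a positive-definite Hermitian `χ`: the (real)
eigenvalues of the Hermitian matrix `χ^{-1/2} * ω * χ^{-1/2}`, where `χ^{1/2}` is the
positive-definite square root of `χ` (junk value `0` if the side conditions fail). -/
noncomputable def eigsWrt {n : ℕ} (χ ω : Matrix (Fin n) (Fin n) ℂ) : Fin n → ℝ :=
  if hχ : χ.PosDef then
    if hM : (((CFC.sqrt χ)⁻¹ : Matrix (Fin n) (Fin n) ℂ) * ω
        * ((CFC.sqrt χ)⁻¹ : Matrix (Fin n) (Fin n) ℂ)).IsHermitian then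
      hM.eigenvalues
    else 0
  else 0

/-- `ω ∈ Γ_{χ,θ}` : the sum of `arccot` of any `n − 1` eigenvalues of `ω` with respect to `χ`
is less than `θ`. -/
def memGamma {n : ℕ} (χ ω : Matrix (Fin n) (Fin n) ℂ) (θ : ℝ) : Prop :=
  ∀ I : Finset (Fin n), I.card = n - 1 → ∑ i ∈ I, arccot (eigsWrt χ ω i) < θ

/-- `A ≤ B` in the Loewner order: `B − A` is positive semidefinite. -/
def loewnerLE {n : ℕ} (A B : Matrix (Fin n) (Fin n) ℂ) : Prop := (B - A).PosSemidef

/-- Quadratic form in an eigenbasis. -/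
lemma quad_form_eq {E : Type*} [NormedAddCommGroup E] [InnerProductSpace ℂ E]
    [FiniteDimensional ℂ E] {n : ℕ} (hn : Module.finrank ℂ E = n) {T : E →ₗ[ℂ] E}
    (hT : T.IsSymmetric) (v : E) :
    (inner ℂ v (T v)).re =
      ∑ j, hT.eigenvalues hn j * ‖inner ℂ (hT.eigenvectorBasis hn j) v‖ ^ 2 := by
  rw [← (hT.eigenvectorBasis hn).sum_inner_mul_inner v (T v), Complex.re_sum]
  refine Finset.sum_congr rfl fun j _ => ?_
  rw [← hT (hT.eigenvectorBasis hn j) v, hT.apply_eigenvectorBasis, inner_smul_left,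
    ← inner_conj_symm v, mul_left_comm]
  rw [Complex.conj_mul']
  simp [← Complex.ofReal_pow]

/-- Weyl monotonicity with a gap. -/
lemma weyl_mono {E : Type*} [NormedAddCommGroup E] [InnerProductSpace ℂ E]
    [FiniteDimensional ℂ E] {n : ℕ} (hn : Module.finrank ℂ E = n) {T U : E →ₗ[ℂ] E}
    (hT : T.IsSymmetric) (hU : U.IsSymmetric) (ε : ℝ)
    (h : ∀ v, (inner ℂ v (T v)).re + ε * ‖v‖ ^ 2 ≤ (inner ℂ v (U v)).re) (k : Fin n) :
    hT.eigenvalues hn k + ε ≤ hU.eigenvalues hn k := by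
  let bT := hT.eigenvectorBasis hn
  let bU := hU.eigenvectorBasis hn
  let L : E →ₗ[ℂ] ({j : Fin n // j ≠ k} → ℂ) := LinearMap.pi fun j =>
    if k < j.1 then (innerₛₗ ℂ (bT j.1)) else (innerₛₗ ℂ (bU j.1))
  have hlt : Module.finrank ℂ ({j : Fin n // j ≠ k} → ℂ) < Module.finrank ℂ E := by
    rw [Module.finrank_fintype_fun_eq_card, hn]
    have := Fintype.card_subtype_lt (p := fun j : Fin n => j ≠ k) (x := k) (by simp)
    simpa using this
  have hker := LinearMap.ker_ne_bot_of_finrank_lt (f := L) hlt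
  obtain ⟨v, hv, hv0⟩ := (Submodule.ne_bot_iff _).1 hker
  have hLv : ∀ j (hj : j ≠ k), L v ⟨j, hj⟩ = 0 := fun j hj => by
    rw [LinearMap.mem_ker.1 hv]; rfl
  have h1 : ∀ j, k < j → inner ℂ (bT j) v = 0 := fun j hj => by
    have := hLv j hj.ne'
    simpa [L, hj] using this
  have h2 : ∀ j, j < k → inner ℂ (bU j) v = 0 := fun j hj => by
    have := hLv j hj.ne
    simpa [L, hj.not_gt] using this
  have n1 : ‖v‖ ^ 2 = ∑ j, ‖inner ℂ (bT j) v‖ ^ 2 := (bT.sum_sq_norm_inner_right v).symm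
  have n2 : ‖v‖ ^ 2 = ∑ j, ‖inner ℂ (bU j) v‖ ^ 2 := (bU.sum_sq_norm_inner_right v).symm
  have q1 : hT.eigenvalues hn k * ‖v‖ ^ 2 ≤ (inner ℂ v (T v)).re := by
    rw [quad_form_eq hn hT, n1, Finset.mul_sum]
    refine Finset.sum_le_sum fun j _ => ?_
    rcases lt_or_ge k j with hj | hj
    · have := h1 j hj
      simp only [bT] at this ⊢
      simp [this]
    · exact mul_le_mul_of_nonneg_right (hT.eigenvalues_antitone hn hj) (by positivity)
  have q2 : (inner ℂ v (U v)).re ≤ hU.eigenvalues hn k * ‖v‖ ^ 2 := by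
    rw [quad_form_eq hn hU, n2, Finset.mul_sum]
    refine Finset.sum_le_sum fun j _ => ?_
    rcases lt_or_ge j k with hj | hj
    · have := h2 j hj
      simp only [bU] at this ⊢
      simp [this]
    · exact mul_le_mul_of_nonneg_right (hU.eigenvalues_antitone hn hj) (by positivity)
  have hpos : 0 < ‖v‖ ^ 2 := by positivity
  have := h v
  nlinarith

lemma matrix_weyl {n : ℕ} {A B : Matrix (Fin n) (Fin n) ℂ} (hA : A.IsHermitian)
    (hB : B.IsHermitian) (ε : ℝ) (h : (B - A - (ε : ℂ) • (1 : Matrix (Fin n) (Fin n) ℂ)).PosSemidef)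
    (i : Fin n) : hA.eigenvalues i + ε ≤ hB.eigenvalues i := by
  unfold Matrix.IsHermitian.eigenvalues Matrix.IsHermitian.eigenvalues₀
  apply weyl_mono
  intro v
  have h0 := h.dotProduct_mulVec_nonneg (WithLp.ofLp v)
  have e : star (WithLp.ofLp v) ⬝ᵥ ((B - A - (ε : ℂ) • (1 : Matrix (Fin n) (Fin n) ℂ)) *ᵥ WithLp.ofLp v)
      = inner ℂ v (Matrix.toEuclideanLin B v) - inner ℂ v (Matrix.toEuclideanLin A v)
        - (ε : ℂ) * inner ℂ v v := by
    simp [-inner_self_eq_norm_sq_to_K, EuclideanSpace.inner_eq_star_dotProduct, Matrix.sub_mulVec, Matrix.smul_mulVec,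
      dotProduct_comm]
  rw [e, inner_self_eq_norm_sq_to_K] at h0
  have := (Complex.le_def.1 h0).1
  simp [← Complex.ofReal_pow] at this
  linarith

open scoped MatrixOrder in
lemma eigs_shift {n : ℕ} (ε₁ : ℝ) (hε₁ : 0 < ε₁) (χ₀ ω χ : Matrix (Fin n) (Fin n) ℂ)
    (h0 : χ₀.PosDef) (hω : ω.IsHermitian) (hχ : χ.IsHermitian) (hle : loewnerLE χ₀ χ)
    (i : Fin n) : eigsWrt χ₀ ω i + ε₁ ≤ eigsWrt χ₀ (ω + (ε₁ : ℝ) • χ) i := by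
  set R := CFC.sqrt χ₀ with hR
  have hnn : 0 ≤ χ₀ := Matrix.nonneg_iff_posSemidef.2 h0.posSemidef
  have hRR : R * R = χ₀ := CFC.sqrt_mul_sqrt_self χ₀ hnn
  have hRh : R.IsHermitian := (Matrix.nonneg_iff_posSemidef.1 (CFC.sqrt_nonneg χ₀)).isHermitian
  have hu : IsUnit R.det := by
    have := h0.det_pos.ne'
    rw [← hRR, Matrix.det_mul] at this
    exact isUnit_iff_ne_zero.2 (left_ne_zero_of_mul this)
  have hS : (R⁻¹).IsHermitian := hRh.inv
  have hA : (R⁻¹ * ω * R⁻¹).IsHermitian := by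
    have := Matrix.isHermitian_mul_mul_conjTranspose R⁻¹ hω
    rwa [hS.eq] at this
  have hsum : (ω + (ε₁ : ℝ) • χ).IsHermitian := by
    refine hω.add ?_
    unfold Matrix.IsHermitian
    rw [Matrix.conjTranspose_smul, hχ.eq, star_trivial]
  have hB : (R⁻¹ * (ω + (ε₁ : ℝ) • χ) * R⁻¹).IsHermitian := by
    have := Matrix.isHermitian_mul_mul_conjTranspose R⁻¹ hsum
    rwa [hS.eq] at this
  have e1 : eigsWrt χ₀ ω = hA.eigenvalues := by
    unfold eigsWrt; rw [dif_pos h0, dif_pos hA]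
  have e2 : eigsWrt χ₀ (ω + (ε₁ : ℝ) • χ) = hB.eigenvalues := by
    unfold eigsWrt; rw [dif_pos h0, dif_pos hB]
  rw [e1, e2]
  apply matrix_weyl
  have h1 : R⁻¹ * χ₀ * R⁻¹ = 1 := by
    rw [← hRR, ← Matrix.mul_assoc, Matrix.nonsing_inv_mul _ hu, Matrix.one_mul,
      Matrix.mul_nonsing_inv _ hu]
  have h2 : R⁻¹ * (ω + (ε₁ : ℝ) • χ) * R⁻¹ - R⁻¹ * ω * R⁻¹
      - (ε₁ : ℂ) • (1 : Matrix (Fin n) (Fin n) ℂ) = (ε₁ : ℂ) • (R⁻¹ * (χ - χ₀) * R⁻¹ᴴ) := by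
    rw [hS.eq, ← h1]
    have : (ε₁ : ℝ) • χ = (ε₁ : ℂ) • χ := by ext; simp
    rw [this]
    simp only [Matrix.mul_add, Matrix.add_mul, Matrix.mul_sub, Matrix.sub_mul, smul_sub,
      Matrix.mul_smul, Matrix.smul_mul]
    abel
  rw [h2]
  exact (Matrix.PosSemidef.mul_mul_conjTranspose_same hle R⁻¹).smul
    (by exact_mod_cast hε₁.le)

lemma arccot_anti {x y : ℝ} (h : x ≤ y) : arccot y ≤ arccot x := by
  unfold arccot
  have := Real.arctan_strictMono.monotone h
  linarith

lemma arccot_pos' (x : ℝ) : 0 < arccot x := by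
  unfold arccot
  have := Real.arctan_lt_pi_div_two x
  linarith

/-- Uniform gain on a compact range of angles. -/
lemma exists_gain (a b ε : ℝ) (ha : 0 < a) (hb : b < π) (hε : 0 < ε) :
    ∃ δ > 0, ∀ x, a ≤ arccot x → arccot x ≤ b → arccot (x + ε) + δ ≤ arccot x := by
  have hc : Continuous fun x : ℝ => arctan (x + ε) - arctan x := by fun_prop
  set K := Set.Icc (tan (π / 2 - b)) (tan (π / 2 - a)) with hK
  have hmem : ∀ x, a ≤ arccot x → arccot x ≤ b → x ∈ K := by
    intro x h1 h2
    have h3 := Real.arctan_lt_pi_div_two x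
    have h4 := Real.neg_pi_div_two_lt_arctan x
    unfold arccot at h1 h2
    constructor
    · rw [← Real.tan_arctan x]
      exact Real.strictMonoOn_tan.monotoneOn ⟨by linarith, by linarith⟩ ⟨h4, h3⟩ (by linarith)
    · conv_lhs => rw [← Real.tan_arctan x]
      exact Real.strictMonoOn_tan.monotoneOn ⟨h4, h3⟩ ⟨by linarith, by linarith⟩ (by linarith)
  by_cases hne : K.Nonempty
  · obtain ⟨y, _, hy⟩ := isCompact_Icc.exists_isMinOn hne hc.continuousOn
    refine ⟨arctan (y + ε) - arctan y, ?_, fun x h1 h2 => ?_⟩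
    · have := Real.arctan_strictMono (show y < y + ε by linarith)
      simpa using this
    · have : arctan (y + ε) - arctan y ≤ arctan (x + ε) - arctan x := hy (hmem x h1 h2)
      unfold arccot
      linarith
  · exact ⟨1, one_pos, fun x h1 h2 => absurd ⟨x, hmem x h1 h2⟩ hne⟩

/-- Fix `n ≥ 2`, `θ ∈ (0, π)` and `ε₁ > 0`. There exists `ε₃ ∈ (0, θ)`
(depending only on `ε₁, θ, n`) such that for every positive-definite Hermitian `χ₀`,
every Hermitian `ω ∈ Γ_{χ₀,θ}` and every Hermitian `χ` with `χ ≥ χ₀` (Loewner order),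
one has `ω + ε₁χ ∈ Γ_{χ₀,θ−ε₃}`. -/
theorem perturb_cone_angle (n : ℕ) (hn : 2 ≤ n) (θ : ℝ) (hθ : θ ∈ Set.Ioo 0 π)
    (ε₁ : ℝ) (hε₁ : 0 < ε₁) :
    ∃ ε₃ ∈ Set.Ioo (0 : ℝ) θ, ∀ χ₀ ω χ : Matrix (Fin n) (Fin n) ℂ,
      χ₀.PosDef → ω.IsHermitian → χ.IsHermitian →
      loewnerLE χ₀ χ →
      memGamma χ₀ ω θ →
      memGamma χ₀ (ω + (ε₁ : ℝ) • χ) (θ - ε₃) := by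
  obtain ⟨hθ0, hθπ⟩ := hθ
  have hn0 : (0 : ℝ) < n := by exact_mod_cast (by omega : 0 < n)
  obtain ⟨δ, hδ, hgain⟩ := exists_gain (θ / (2 * n)) θ ε₁ (by positivity) hθπ hε₁
  refine ⟨min δ (θ / 2), ⟨by positivity, (min_le_right _ _).trans_lt (by linarith)⟩, ?_⟩
  intro χ₀ ω χ h0 hω hχ hle hmem I hI
  have hI' := hmem I hI
  have hsh := eigs_shift ε₁ hε₁ χ₀ ω χ h0 hω hχ hle
  have hmono : ∀ i, arccot (eigsWrt χ₀ (ω + (ε₁ : ℝ) • χ) i) ≤ arccot (eigsWrt χ₀ ω i) :=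
    fun i => arccot_anti (by linarith [hsh i])
  by_cases hex : ∃ i ∈ I, θ / (2 * n) ≤ arccot (eigsWrt χ₀ ω i)
  · obtain ⟨i, hi, hia⟩ := hex
    have hle' : arccot (eigsWrt χ₀ ω i) ≤ ∑ i ∈ I, arccot (eigsWrt χ₀ ω i) :=
      Finset.single_le_sum (f := fun i => arccot (eigsWrt χ₀ ω i))
        (fun j _ => (arccot_pos' _).le) hi
    have hg := hgain _ hia (hle'.trans hI'.le)
    have hg2 := arccot_anti (hsh i)
    rw [← Finset.add_sum_erase I _ hi] at hI' ⊢
    have := Finset.sum_le_sum (s := I.erase i) fun j _ => hmono j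
    have := min_le_left δ (θ / 2)
    linarith
  · push Not at hex
    have hb : ∑ i ∈ I, arccot (eigsWrt χ₀ (ω + (ε₁ : ℝ) • χ) i) ≤ I.card • (θ / (2 * n)) :=
      Finset.sum_le_card_nsmul _ _ _ fun i hi => (hmono i).trans (hex i hi).le
    rw [hI, nsmul_eq_mul] at hb
    have hlt : ((n - 1 : ℕ) : ℝ) * (θ / (2 * n)) < n * (θ / (2 * n)) := by
      apply mul_lt_mul_of_pos_right _ (by positivity)
      exact_mod_cast (by omega : n - 1 < n)
    have : (n : ℝ) * (θ / (2 * n)) = θ / 2 := by field_simp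
    have := min_le_right δ (θ / 2)
    linarith
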